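/- Let N ≥ 1 and let u, v : ℝ^N → ℝ be of class C². Then (u, v) is a classical solution of the system (P_Λ) with Λ = 3 (no sign assumption) if and only if there exist functions w₁, w₂ : ℝ^N → ℝ of class C², each solving the Allen–Cahn equation −Δw = w − w³ pointwise on ℝ^N, such that u = (w₁ + w₂)/2 and v = (w₁ − w₂)/2 on ℝ^N. -/

import Mathlib

/-! With `w₁ = u + v` and `w₂ = u - v`, the binomial identities
`(u ± v)³ = (u³ + 3 u v²) ± (v³ + 3 u² v)` say that the nonlinearity of the system with `Λ = 3`
decouples: adding and subtracting its two equations gives the Allen–Cahn equations for `w₁` and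
`w₂`, and conversely. Beyond this algebra only the linearity of `lap` on `C²` functions
(`lap_add`, `lap_sub`) is needed. -/

open scoped RealInnerProductSpace
open Filter

noncomputable section

/-- The Laplacian of `f : ℝ^N → ℝ`, as the sum of the pure second partial
derivatives in the coordinate directions. -/
def lap (N : ℕ) (f : EuclideanSpace ℝ (Fin N) → ℝ) (x : EuclideanSpace ℝ (Fin N)) : ℝ :=
  ∑ i : Fin N,
    fderiv ℝ (fun y => fderiv ℝ f y (EuclideanSpace.single i 1)) x (EuclideanSpace.single i 1)

/-- `(u, v)` is a classical solution of the system `(P_Λ)` on `ℝ^N`: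
`u, v` are `C²` and `-Δu = u - u³ - Λ u v²`, `-Δv = v - v³ - Λ u² v` pointwise. -/
def IsSolution (N : ℕ) (Λ : ℝ) (u v : EuclideanSpace ℝ (Fin N) → ℝ) : Prop :=
  ContDiff ℝ 2 u ∧ ContDiff ℝ 2 v ∧
  (∀ x, -lap N u x = u x - (u x) ^ 3 - Λ * u x * (v x) ^ 2) ∧
  (∀ x, -lap N v x = v x - (v x) ^ 3 - Λ * (u x) ^ 2 * v x)

/-- Condition `(h∞)`: `u → 1`, `v → 0` as `x_N → +∞` and `u → 0`, `v → 1` as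
`x_N → -∞`, uniformly with respect to `x' ∈ ℝ^{N-1}` (the dimension is `N + 1`). -/
def Hinf (N : ℕ) (u v : EuclideanSpace ℝ (Fin (N + 1)) → ℝ) : Prop :=
  (∀ ε : ℝ, 0 < ε → ∃ M : ℝ, ∀ x : EuclideanSpace ℝ (Fin (N + 1)),
    M ≤ x (Fin.last N) → |u x - 1| < ε ∧ |v x| < ε) ∧
  (∀ ε : ℝ, 0 < ε → ∃ M : ℝ, ∀ x : EuclideanSpace ℝ (Fin (N + 1)),
    x (Fin.last N) ≤ M → |u x| < ε ∧ |v x - 1| < ε)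

theorem differentiable_partial {N : ℕ} {f : EuclideanSpace ℝ (Fin N) → ℝ} (hf : ContDiff ℝ 2 f)
    (e : EuclideanSpace ℝ (Fin N)) : Differentiable ℝ (fun y => fderiv ℝ f y e) :=
  ((hf.fderiv_right (m := 1) (by norm_num)).clm_apply contDiff_const).differentiable (by norm_num)

theorem lap_add {N : ℕ} {f g : EuclideanSpace ℝ (Fin N) → ℝ}
    (hf : ContDiff ℝ 2 f) (hg : ContDiff ℝ 2 g) (x : EuclideanSpace ℝ (Fin N)) :
    lap N (fun y => f y + g y) x = lap N f x + lap N g x := by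
  unfold lap
  rw [← Finset.sum_add_distrib]
  refine Finset.sum_congr rfl fun i _ => ?_
  have h : (fun y => fderiv ℝ (fun y => f y + g y) y (EuclideanSpace.single i 1)) =
      fun y => fderiv ℝ f y (EuclideanSpace.single i 1) +
        fderiv ℝ g y (EuclideanSpace.single i 1) := by
    funext y
    rw [fderiv_fun_add (hf.differentiable (by norm_num) y) (hg.differentiable (by norm_num) y)]
    rfl
  rw [h, fderiv_fun_add (differentiable_partial hf _ x) (differentiable_partial hg _ x)]
  rfl

theorem lap_sub {N : ℕ} {f g : EuclideanSpace ℝ (Fin N) → ℝ}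
    (hf : ContDiff ℝ 2 f) (hg : ContDiff ℝ 2 g) (x : EuclideanSpace ℝ (Fin N)) :
    lap N (fun y => f y - g y) x = lap N f x - lap N g x := by
  -- Apply additivity to `f = (f - g) + g`.
  have h := lap_add (hf.sub hg) hg x
  simp only [sub_add_cancel] at h
  linarith

/-- Proposition 6.1: characterization of solutions of the
system with `Λ = 3` in terms of pairs of solutions of the Allen–Cahn equation. -/
theorem stmt_18 (N : ℕ)
    (u v : EuclideanSpace ℝ (Fin (N + 1)) → ℝ)
    (hu : ContDiff ℝ 2 u) (hv : ContDiff ℝ 2 v) :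
    IsSolution (N + 1) 3 u v ↔
    ∃ w₁ w₂ : EuclideanSpace ℝ (Fin (N + 1)) → ℝ,
      ContDiff ℝ 2 w₁ ∧ ContDiff ℝ 2 w₂ ∧
      (∀ x, -lap (N + 1) w₁ x = w₁ x - (w₁ x) ^ 3) ∧
      (∀ x, -lap (N + 1) w₂ x = w₂ x - (w₂ x) ^ 3) ∧
      (∀ x, u x = (w₁ x + w₂ x) / 2 ∧ v x = (w₁ x - w₂ x) / 2) := by
  constructor
  · rintro ⟨-, -, h₁, h₂⟩
    refine ⟨fun x => u x + v x, fun x => u x - v x, hu.add hv, hu.sub hv, fun x => ?_, fun x => ?_,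
      fun x => ⟨by ring, by ring⟩⟩
    · rw [lap_add hu hv]
      linear_combination h₁ x + h₂ x
    · rw [lap_sub hu hv]
      linear_combination h₁ x - h₂ x
  · rintro ⟨w₁, w₂, -, -, h₁, h₂, h⟩
    obtain rfl : w₁ = fun x => u x + v x := by
      funext x
      linarith [(h x).1, (h x).2]
    obtain rfl : w₂ = fun x => u x - v x := by
      funext x
      linarith [(h x).1, (h x).2]
    simp only [lap_add hu hv] at h₁
    simp only [lap_sub hu hv] at h₂
    refine ⟨hu, hv, fun x => ?_, fun x => ?_⟩
    · linear_combination (h₁ x + h₂ x) / 2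
    · linear_combination (h₁ x - h₂ x) / 2
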